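/- Main theorem: Let n be an odd prime and r₁, s₁, r₂, s₂ nonzero elements of ZMod n with r₁s₂ ≠ r₂s₁. Then there exists a constant C > 0 (independent of n) such that the operator norm of ½(M(r₁,s₁) + M(r₂,s₂)) is at most 1 − C/n. -/

import Mathlib

open Matrix

/-- `ω n = e^{2πi/n}`. -/
noncomputable def omg (n : ℕ) : ℂ := Complex.exp (2 * Real.pi * Complex.I / n)

/-- The cyclic shift matrix: `S_{i,j} = 1` iff `i + 1 = j` in `ZMod n`. -/
noncomputable def Smat (n : ℕ) : Matrix (ZMod n) (ZMod n) ℂ :=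
  Matrix.of fun i j => if i + 1 = j then 1 else 0

/-- The diagonal matrix `R` with `R_{j,j} = ω^j`. -/
noncomputable def Rmat (n : ℕ) : Matrix (ZMod n) (ZMod n) ℂ :=
  Matrix.diagonal fun j => omg n ^ (j.val)

/-- The twisted circulant `A(r,s) = R^r S^s`. -/
noncomputable def Amat (n : ℕ) [NeZero n] (r s : ZMod n) : Matrix (ZMod n) (ZMod n) ℂ :=
  Rmat n ^ r.val * Smat n ^ s.val

/-- The Hermitian matrix `M(r,s) = ½(A(r,s) + A(r,s)*)`. -/
noncomputable def Mmat (n : ℕ) [NeZero n] (r s : ZMod n) : Matrix (ZMod n) (ZMod n) ℂ :=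
  (1 / 2 : ℂ) • (Amat n r s + (Amat n r s)ᴴ)

/-- The ℓ²-operator norm of a matrix. -/
noncomputable def opNorm {n : ℕ} [NeZero n] (M : Matrix (ZMod n) (ZMod n) ℂ) : ℝ :=
  ‖Matrix.toEuclideanCLM (𝕜 := ℂ) M‖

/-!
Let `U`, `V` be unitaries with `U * V = ζ • (V * U)`. If both almost fixed a unit vector `x`, then
`U V x` and `V U x` would both be close to `x`, which the phase `ζ` forbids. Quantitatively, the
identity `(ζ - 1) ⟪V⋆x, U x⟫ = ⟪U⋆x - x, V x - x⟫ - ⟪V⋆x - x, U x - x⟫` bounds `‖ζ - 1‖` by a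
multiple of `‖U x - x‖² + ‖V x - x‖²`, and this last sum is exactly the amount by which the
quadratic form of `U + U⋆ + V + V⋆` at `x` falls short of `4`. Replacing `(U, V)` by `(-U, -V)`,
which satisfies the same relation, controls the form from below. The matrices `A(r, s)` are such
unitaries, with `ζ` an `n`-th root of unity different from `1`, hence at distance at least `1 / n`
from `1`.
-/

lemma norm_sub_one_le_two {R : Type*} [SeminormedRing R] [NormOneClass R] {z : R} (hz : ‖z‖ ≤ 1) :
    ‖z - 1‖ ≤ 2 :=
  (norm_sub_le_of_le hz norm_one.le).trans_eq one_add_one_eq_two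

section CommutationUpToPhase

open RCLike
open scoped InnerProductSpace

variable {𝕜 E : Type*} [RCLike 𝕜] [NormedAddCommGroup E] [InnerProductSpace 𝕜 E]

lemma norm_le_of_isSymmetric_of_abs_re_inner_le {T : E →L[𝕜] E} (hT : T.IsSymmetric)
    {c : ℝ} (hc : 0 ≤ c) (h : ∀ x, |re ⟪T x, x⟫_𝕜| ≤ c * ‖x‖ ^ 2) : ‖T‖ ≤ c := by
  rw [T.norm_eq_iSup_rayleighQuotient hT]
  refine ciSup_le fun x => ?_
  rw [ContinuousLinearMap.rayleighQuotient, ContinuousLinearMap.reApplyInnerSelf_apply, abs_div,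
    abs_sq]
  exact div_le_of_le_mul₀ (by positivity) hc (h x)

variable [CompleteSpace E] {U V : E →L[𝕜] E} {ζ : 𝕜}

lemma norm_star_apply_sub_self_of_mem_unitary (hU : U ∈ unitary (E →L[𝕜] E)) (x : E) :
    ‖star U x - x‖ = ‖U x - x‖ := by
  have hUx : U (star U x) = x := DFunLike.congr_fun (Unitary.mul_star_self_of_mem hU) x
  rw [← U.norm_map_of_mem_unitary hU, map_sub, hUx, norm_sub_rev]

lemma re_inner_add_star_apply_self_of_mem_unitary (hU : U ∈ unitary (E →L[𝕜] E)) (x : E) :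
    re ⟪(U + star U) x, x⟫_𝕜 = 2 * ‖x‖ ^ 2 - ‖U x - x‖ ^ 2 := by
  have hstar : re ⟪star U x, x⟫_𝕜 = re ⟪U x, x⟫_𝕜 := by
    rw [ContinuousLinearMap.star_eq_adjoint, ContinuousLinearMap.adjoint_inner_left, inner_re_symm]
  rw [_root_.add_apply, inner_add_left, map_add, hstar, norm_sub_sq (𝕜 := 𝕜),
    U.norm_map_of_mem_unitary hU]
  ring

lemma sub_one_mul_inner_star_apply (h : U * V = ζ • (V * U)) (x : E) :
    (ζ - 1) * ⟪star V x, U x⟫_𝕜 =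
      ⟪star U x - x, V x - x⟫_𝕜 - ⟪star V x - x, U x - x⟫_𝕜 := by
  have hUV : U (V x) = ζ • V (U x) := DFunLike.congr_fun h x
  simp only [ContinuousLinearMap.star_eq_adjoint, inner_sub_left, inner_sub_right,
    ContinuousLinearMap.adjoint_inner_left, hUV, inner_smul_right]
  ring

lemma norm_sq_sub_le_norm_inner_star_apply (hU : U ∈ unitary (E →L[𝕜] E))
    (hV : V ∈ unitary (E →L[𝕜] E)) (x : E) :
    ‖x‖ ^ 2 - (‖U x - x‖ ^ 2 + ‖V x - x‖ ^ 2) ≤ ‖⟪star V x, U x⟫_𝕜‖ := by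
  have hdist : ‖star V x - U x‖ ≤ ‖V x - x‖ + ‖U x - x‖ := by
    rw [← norm_star_apply_sub_self_of_mem_unitary hV, norm_sub_rev (U x)]
    exact norm_sub_le_norm_sub_add_norm_sub _ _ _
  have hpolar := norm_sub_sq (𝕜 := 𝕜) (star V x) (U x)
  rw [U.norm_map_of_mem_unitary hU,
    (star V).norm_map_of_mem_unitary (Unitary.star_mem hV)] at hpolar
  have hre := re_le_norm ⟪star V x, U x⟫_𝕜
  have hsq := pow_le_pow_left₀ (norm_nonneg _) hdist 2
  linarith [add_sq_le (a := ‖V x - x‖) (b := ‖U x - x‖)]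

lemma norm_sub_one_mul_norm_inner_star_apply_le (hU : U ∈ unitary (E →L[𝕜] E))
    (hV : V ∈ unitary (E →L[𝕜] E)) (h : U * V = ζ • (V * U)) (x : E) :
    ‖ζ - 1‖ * ‖⟪star V x, U x⟫_𝕜‖ ≤ ‖U x - x‖ ^ 2 + ‖V x - x‖ ^ 2 :=
  calc ‖ζ - 1‖ * ‖⟪star V x, U x⟫_𝕜‖
      = ‖⟪star U x - x, V x - x⟫_𝕜 - ⟪star V x - x, U x - x⟫_𝕜‖ := by
        rw [← norm_mul, sub_one_mul_inner_star_apply h]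
    _ ≤ ‖star U x - x‖ * ‖V x - x‖ + ‖star V x - x‖ * ‖U x - x‖ :=
        (norm_sub_le _ _).trans (add_le_add (norm_inner_le_norm _ _) (norm_inner_le_norm _ _))
    _ = 2 * ‖U x - x‖ * ‖V x - x‖ := by
        rw [norm_star_apply_sub_self_of_mem_unitary hU, norm_star_apply_sub_self_of_mem_unitary hV]
        ring
    _ ≤ ‖U x - x‖ ^ 2 + ‖V x - x‖ ^ 2 := two_mul_le_add_sq _ _

lemma norm_sub_one_mul_norm_sq_le (hU : U ∈ unitary (E →L[𝕜] E)) (hV : V ∈ unitary (E →L[𝕜] E))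
    (hζ : ‖ζ‖ = 1) (h : U * V = ζ • (V * U)) (x : E) :
    ‖ζ - 1‖ * ‖x‖ ^ 2 ≤ 3 * (‖U x - x‖ ^ 2 + ‖V x - x‖ ^ 2) := by
  set q := ‖U x - x‖ ^ 2 + ‖V x - x‖ ^ 2
  have hζ2 := norm_sub_one_le_two hζ.le
  calc ‖ζ - 1‖ * ‖x‖ ^ 2 = ‖ζ - 1‖ * (‖x‖ ^ 2 - q) + ‖ζ - 1‖ * q := by ring
    _ ≤ ‖ζ - 1‖ * ‖⟪star V x, U x⟫_𝕜‖ + 2 * q := by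
        gcongr
        exact norm_sq_sub_le_norm_inner_star_apply hU hV x
    _ ≤ q + 2 * q := by
        gcongr
        exact norm_sub_one_mul_norm_inner_star_apply_le hU hV h x
    _ = 3 * q := by ring

lemma re_inner_add_star_add_apply_self_le (hU : U ∈ unitary (E →L[𝕜] E))
    (hV : V ∈ unitary (E →L[𝕜] E)) (hζ : ‖ζ‖ = 1) (h : U * V = ζ • (V * U)) (x : E) :
    re ⟪((U + star U) + (V + star V)) x, x⟫_𝕜 ≤ (4 - ‖ζ - 1‖ / 3) * ‖x‖ ^ 2 := by
  rw [_root_.add_apply, inner_add_left, map_add, re_inner_add_star_apply_self_of_mem_unitary hU,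
    re_inner_add_star_apply_self_of_mem_unitary hV]
  linarith [norm_sub_one_mul_norm_sq_le hU hV hζ h x]

theorem norm_add_star_add_le_of_mul_eq_smul_mul (hU : U ∈ unitary (E →L[𝕜] E))
    (hV : V ∈ unitary (E →L[𝕜] E)) (hζ : ‖ζ‖ = 1) (h : U * V = ζ • (V * U)) :
    ‖(U + star U) + (V + star V)‖ ≤ 4 - ‖ζ - 1‖ / 3 := by
  have hT : IsSelfAdjoint ((U + star U) + (V + star V)) :=
    (IsSelfAdjoint.add_star_self U).add (IsSelfAdjoint.add_star_self V)
  have hζ2 := norm_sub_one_le_two hζ.le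
  refine norm_le_of_isSymmetric_of_abs_re_inner_le hT.isSymmetric (by linarith) fun x => abs_le'.2
    ⟨re_inner_add_star_add_apply_self_le hU hV hζ h x, ?_⟩
  have hneg : (-U + star (-U)) + (-V + star (-V)) = -((U + star U) + (V + star V)) := by
    rw [star_neg, star_neg]
    abel
  have hU' : -U ∈ unitary (E →L[𝕜] E) := (-(⟨U, hU⟩ : unitary (E →L[𝕜] E))).2
  have hV' : -V ∈ unitary (E →L[𝕜] E) := (-(⟨V, hV⟩ : unitary (E →L[𝕜] E))).2
  have hle := re_inner_add_star_add_apply_self_le hU' hV' hζ (by rwa [neg_mul_neg, neg_mul_neg]) x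
  rwa [hneg, _root_.neg_apply, inner_neg_left, map_neg] at hle

end CommutationUpToPhase

section RootsOfUnity

lemma norm_one_sub_pow_le {R : Type*} [SeminormedRing R] [NormOneClass R] {z : R} (hz : ‖z‖ ≤ 1)
    (j : ℕ) : ‖1 - z ^ j‖ ≤ j * ‖1 - z‖ := by
  have hsum : ‖∑ i ∈ Finset.range j, z ^ i‖ ≤ j :=
    (norm_sum_le_of_le _ fun i _ => (norm_pow_le z i).trans (pow_le_one₀ (norm_nonneg z) hz)).trans
      (by simp)
  calc ‖1 - z ^ j‖ = ‖(1 - z) * ∑ i ∈ Finset.range j, z ^ i‖ := by rw [mul_neg_geom_sum]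
    _ ≤ ‖1 - z‖ * j := (norm_mul_le _ _).trans (by gcongr)
    _ = j * ‖1 - z‖ := mul_comm _ _

lemma one_div_le_norm_sub_one_of_pow_eq_one {𝕜 : Type*} [RCLike 𝕜] {n : ℕ} (hn : n ≠ 0) {z : 𝕜}
    (hz : z ^ n = 1) (hz1 : z ≠ 1) : 1 / (n : ℝ) ≤ ‖z - 1‖ := by
  have hn0 : (0 : ℝ) < n := by positivity
  have hnorm : ‖z‖ = 1 := by
    rw [← pow_eq_one_iff_of_nonneg (norm_nonneg z) hn, ← norm_pow, hz, norm_one]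
  -- The powers of `z` sum to zero, so on average they are at distance at least `1` from `1`.
  have hsum : ∑ j ∈ Finset.range n, (1 - z ^ j) = n := by
    rw [Finset.sum_sub_distrib, geom_sum_eq hz1, hz]
    simp
  have hle : (n : ℝ) * 1 ≤ n * (n * ‖1 - z‖) :=
    calc (n : ℝ) * 1 = ‖∑ j ∈ Finset.range n, (1 - z ^ j)‖ := by
          rw [hsum, RCLike.norm_natCast, mul_one]
      _ ≤ ∑ _j ∈ Finset.range n, n * ‖1 - z‖ := norm_sum_le_of_le _ fun j hj =>
          (norm_one_sub_pow_le hnorm.le j).trans (by gcongr; exact (Finset.mem_range.1 hj).le)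
      _ = n * (n * ‖1 - z‖) := by simp
  rw [norm_sub_rev, div_le_iff₀' hn0]
  exact le_of_mul_le_mul_left hle hn0

end RootsOfUnity

section TwistedCirculant

open ZMod (stdAddChar)

variable {n : ℕ} [NeZero n]

lemma omg_pow_eq_stdAddChar (j : ℕ) : omg n ^ j = stdAddChar (j : ZMod n) := by
  rw [← Int.cast_natCast, ZMod.stdAddChar_coe, omg, ← Complex.exp_nat_mul]
  congr 1
  push_cast
  ring

lemma Smat_pow_apply (k : ℕ) (i j : ZMod n) :
    (Smat n ^ k) i j = if i + k = j then 1 else 0 := by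
  induction k generalizing j with
  | zero => simp [Matrix.one_apply]
  | succ k ih =>
    simp only [pow_succ, Matrix.mul_apply, ih, ite_mul, zero_mul, one_mul, Finset.sum_ite_eq,
      Finset.mem_univ, if_true]
    rw [Smat, Matrix.of_apply, Nat.cast_succ, add_assoc]

lemma Amat_apply (r s i j : ZMod n) :
    Amat n r s i j = if i + s = j then stdAddChar (i * r) else 0 := by
  have hpow : stdAddChar i ^ r.val = stdAddChar (i * r) := by
    rw [← AddChar.map_nsmul_eq_pow, nsmul_eq_mul, ZMod.natCast_zmod_val, mul_comm]
  rw [Amat, Rmat, Matrix.diagonal_pow, Matrix.diagonal_mul, Smat_pow_apply]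
  simp [omg_pow_eq_stdAddChar, hpow]

lemma Amat_zero_zero : Amat n 0 0 = 1 := by
  simp [Amat]

lemma Amat_mul (r₁ s₁ r₂ s₂ : ZMod n) :
    Amat n r₁ s₁ * Amat n r₂ s₂ = stdAddChar (s₁ * r₂) • Amat n (r₁ + r₂) (s₁ + s₂) := by
  ext i j
  simp only [Matrix.mul_apply, Matrix.smul_apply, Amat_apply, smul_eq_mul, ite_mul, zero_mul,
    Finset.sum_ite_eq, Finset.mem_univ, if_true]
  simp only [mul_ite, mul_zero, ← AddChar.map_add_eq_mul, add_assoc]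
  congr 2
  ring

lemma star_Amat (r s : ZMod n) : star (Amat n r s) = stdAddChar (s * r) • Amat n (-r) (-s) := by
  ext i j
  simp only [Matrix.star_apply, Matrix.smul_apply, Amat_apply, smul_eq_mul, ← sub_eq_add_neg,
    sub_eq_iff_eq_add, eq_comm (a := i)]
  split_ifs with hij
  · rw [← starRingEnd_apply, ← AddChar.map_neg_eq_conj, ← AddChar.map_add_eq_mul, ← hij]
    congr 1
    ring
  · simp

lemma Amat_mem_unitary (r s : ZMod n) : Amat n r s ∈ unitary (Matrix (ZMod n) (ZMod n) ℂ) := by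
  rw [← Matrix.unitaryGroup, Matrix.mem_unitaryGroup_iff, star_Amat, mul_smul_comm, Amat_mul,
    smul_smul, ← AddChar.map_add_eq_mul, mul_neg, add_neg_cancel, AddChar.map_zero_eq_one, one_smul,
    add_neg_cancel, add_neg_cancel, Amat_zero_zero]

lemma Amat_mul_eq_smul_mul (r₁ s₁ r₂ s₂ : ZMod n) :
    Amat n r₁ s₁ * Amat n r₂ s₂ =
      stdAddChar (s₁ * r₂ - s₂ * r₁) • (Amat n r₂ s₂ * Amat n r₁ s₁) := by
  rw [Amat_mul, Amat_mul, smul_smul, ← AddChar.map_add_eq_mul, sub_add_cancel, add_comm r₂,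
    add_comm s₂]

lemma opNorm_half_smul_Mmat_add_Mmat_le (r₁ s₁ r₂ s₂ : ZMod n) :
    opNorm ((1 / 2 : ℂ) • (Mmat n r₁ s₁ + Mmat n r₂ s₂)) ≤
      1 - ‖stdAddChar (s₁ * r₂ - s₂ * r₁) - 1‖ / 12 := by
  let Φ := Matrix.toEuclideanCLM (n := ZMod n) (𝕜 := ℂ)
  have hcomm : Φ (Amat n r₁ s₁) * Φ (Amat n r₂ s₂) =
      stdAddChar (s₁ * r₂ - s₂ * r₁) • (Φ (Amat n r₂ s₂) * Φ (Amat n r₁ s₁)) := by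
    rw [← map_mul, Amat_mul_eq_smul_mul, map_smul, map_mul]
  have hbound := norm_add_star_add_le_of_mul_eq_smul_mul
    (Unitary.map_mem Φ (Amat_mem_unitary r₁ s₁))
    (Unitary.map_mem Φ (Amat_mem_unitary r₂ s₂)) (AddChar.norm_apply _ _) hcomm
  have hsum : Φ ((1 / 2 : ℂ) • (Mmat n r₁ s₁ + Mmat n r₂ s₂)) = (1 / 4 : ℂ) •
      ((Φ (Amat n r₁ s₁) + star (Φ (Amat n r₁ s₁))) +
        (Φ (Amat n r₂ s₂) + star (Φ (Amat n r₂ s₂)))) := by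
    simp only [Mmat, ← Matrix.star_eq_conjTranspose, ← smul_add, smul_smul, map_smul, map_add,
      map_star]
    norm_num
  have hquarter : ‖(1 / 4 : ℂ)‖ = 1 / 4 := by norm_num
  rw [opNorm, hsum, norm_smul, hquarter]
  linarith

end TwistedCirculant

theorem stmt14_general {n : ℕ} [NeZero n] {r₁ s₁ r₂ s₂ : ZMod n} (h : r₁ * s₂ ≠ r₂ * s₁) :
    opNorm ((1 / 2 : ℂ) • (Mmat n r₁ s₁ + Mmat n r₂ s₂)) ≤ 1 - 1 / 12 / n := by
  set d := s₁ * r₂ - s₂ * r₁ with hd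
  have hd0 : d ≠ 0 := fun h0 => h (by linear_combination hd - h0)
  have hroot : ZMod.stdAddChar d ^ n = 1 := by
    rw [← AddChar.map_nsmul_eq_pow, nsmul_eq_mul, ZMod.natCast_self, zero_mul,
      AddChar.map_zero_eq_one]
  have hne : ZMod.stdAddChar d ≠ 1 := by
    rw [← AddChar.map_zero_eq_one (ZMod.stdAddChar (N := n))]
    exact ZMod.injective_stdAddChar.ne hd0
  have hdist := one_div_le_norm_sub_one_of_pow_eq_one (NeZero.ne n) hroot hne
  calc opNorm ((1 / 2 : ℂ) • (Mmat n r₁ s₁ + Mmat n r₂ s₂))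
      ≤ 1 - ‖ZMod.stdAddChar d - 1‖ / 12 := opNorm_half_smul_Mmat_add_Mmat_le r₁ s₁ r₂ s₂
    _ ≤ 1 - 1 / n / 12 := by gcongr
    _ = 1 - 1 / 12 / n := by rw [div_right_comm]

theorem stmt14 :
    ∃ C > (0 : ℝ), ∀ (n : ℕ) [NeZero n] [Fact (Nat.Prime n)], Odd n →
      ∀ r₁ s₁ r₂ s₂ : ZMod n, r₁ ≠ 0 → s₁ ≠ 0 → r₂ ≠ 0 → s₂ ≠ 0 →
        r₁ * s₂ ≠ r₂ * s₁ →
        opNorm ((1 / 2 : ℂ) • (Mmat n r₁ s₁ + Mmat n r₂ s₂)) ≤ 1 - C / n :=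
  ⟨1 / 12, by norm_num, fun _ _ _ _ _ _ _ _ _ _ _ _ h => stmt14_general h⟩
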